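/- non*_ω(nwd) = non(ℳ), where nwd is the nowhere dense ideal on 2^{<ω} and non(ℳ) is the uniformity of the meager ideal. -/

import Mathlib

open Cardinal Filter Set
open scoped ENNReal

noncomputable section

/-- An ideal on a (countable) set `X`, in the sense of the paper: a proper family of
subsets of `X` closed under taking subsets and finite unions and containing all
finite subsets of `X`. -/
structure IsIdealOn {X : Type} (I : Set (Set X)) : Prop where
  subset_mem : ∀ ⦃A B : Set X⦄, A ⊆ B → B ∈ I → A ∈ I
  union_mem : ∀ ⦃A B : Set X⦄, A ∈ I → B ∈ I → A ∪ B ∈ I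
  finite_mem : ∀ ⦃A : Set X⦄, A.Finite → A ∈ I
  proper : (univ : Set X) ∉ I

/-- The finite initial segment `x ↾ n` of `x : X^ω`, as a list (an element of `X^{<ω}`). -/
def seg {X : Type} (x : ℕ → X) (n : ℕ) : List X := (List.range n).map x

/-- The `I`-Miller null ideal `M_I`: the σ-ideal on `X^ω` generated by the sets
`M_φ = {x | ∀^∞ n, x n ∈ φ (x ↾ n)}`, where `φ : X^{<ω} → I`.  (A set is in the
generated σ-ideal iff it is covered by countably many generators.) -/
def MIdeal {X : Type} (I : Set (Set X)) : Set (Set (ℕ → X)) :=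
  {A | ∃ φ : ℕ → List X → Set X, (∀ n s, φ n s ∈ I) ∧
    A ⊆ ⋃ n, {x : ℕ → X | ∀ᶠ m in atTop, x m ∈ φ n (seg x m)}}

/-- The σ-ideal `K_I` on `X^ω` generated by the sets
`K_φ = {x | ∀^∞ n, x n ∈ φ n}`, where `φ : ω → I`. -/
def KIdeal {X : Type} (I : Set (Set X)) : Set (Set (ℕ → X)) :=
  {A | ∃ φ : ℕ → ℕ → Set X, (∀ n m, φ n m ∈ I) ∧
    A ⊆ ⋃ n, {x : ℕ → X | ∀ᶠ m in atTop, x m ∈ φ n m}}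

/-- Additivity `add(J)` of a (σ-)ideal `J`: the least cardinality of a subfamily of `J`
whose union is not in `J`. -/
def addIdeal {Y : Type} (J : Set (Set Y)) : Cardinal :=
  sInf {c | ∃ 𝒜 : Set (Set Y), 𝒜 ⊆ J ∧ ⋃₀ 𝒜 ∉ J ∧ Cardinal.mk 𝒜 = c}

/-- Covering number `cov(J)`: the least cardinality of a subfamily of `J` covering `Y`. -/
def covIdeal {Y : Type} (J : Set (Set Y)) : Cardinal :=
  sInf {c | ∃ 𝒜 : Set (Set Y), 𝒜 ⊆ J ∧ ⋃₀ 𝒜 = Set.univ ∧ Cardinal.mk 𝒜 = c}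

/-- Uniformity `non(J)`: the least cardinality of a subset of `Y` not in `J`. -/
def nonIdeal {Y : Type} (J : Set (Set Y)) : Cardinal :=
  sInf {c | ∃ S : Set Y, S ∉ J ∧ Cardinal.mk S = c}

/-- Cofinality `cof(J)`: the least cardinality of a cofinal (w.r.t. `⊆`) subfamily of `J`. -/
def cofIdeal {Y : Type} (J : Set (Set Y)) : Cardinal :=
  sInf {c | ∃ 𝒜 : Set (Set Y), 𝒜 ⊆ J ∧ (∀ B ∈ J, ∃ A ∈ 𝒜, B ⊆ A) ∧ Cardinal.mk 𝒜 = c}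

/-- `f ≤* g`: eventual domination on `ω^ω`. -/
def LeStar (f g : ℕ → ℕ) : Prop := ∀ᶠ n in atTop, f n ≤ g n

/-- The bounding number `𝔟`. -/
def bNum : Cardinal :=
  sInf {c | ∃ F : Set (ℕ → ℕ), (∀ g : ℕ → ℕ, ∃ f ∈ F, ¬ LeStar f g) ∧ Cardinal.mk F = c}

/-- The dominating number `𝔡`. -/
def dNum : Cardinal :=
  sInf {c | ∃ F : Set (ℕ → ℕ), (∀ f : ℕ → ℕ, ∃ g ∈ F, LeStar f g) ∧ Cardinal.mk F = c}

/-- `A ⊆* B`: almost inclusion (`A \ B` finite). -/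
def AlSub {X : Type} (A B : Set X) : Prop := (A \ B).Finite

/-- The set of cardinalities of witnessing families for `add*_ω(I)`: families `𝒜 ⊆ I`
such that for every countable `B̄ ⊆ I` some `A ∈ 𝒜` satisfies `A ⊄* B` for all `B ∈ B̄`.
`add*_ω(I)` is the minimum of this set (`∞` if it is empty). -/
def addStarOmegaFam {X : Type} (I : Set (Set X)) : Set Cardinal :=
  {c | ∃ 𝒜 : Set (Set X), 𝒜 ⊆ I ∧
    (∀ B : ℕ → Set X, (∀ n, B n ∈ I) → ∃ A ∈ 𝒜, ∀ n, ¬ AlSub A (B n)) ∧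
    Cardinal.mk 𝒜 = c}

/-- The set of cardinalities of witnessing families for `cof*_ω(I)`: families `𝒜` of
countable subsets of `I` such that for every countable `B̄ ⊆ I` there is `Ā ∈ 𝒜` with:
every `B ∈ B̄` satisfies `B ⊆* A` for some `A ∈ Ā`.  `cof*_ω(I)` is the minimum. -/
def cofStarOmegaFam {X : Type} (I : Set (Set X)) : Set Cardinal :=
  {c | ∃ 𝒜 : Set (Set (Set X)), (∀ As ∈ 𝒜, As.Countable ∧ As ⊆ I) ∧
    (∀ B : ℕ → Set X, (∀ n, B n ∈ I) → ∃ As ∈ 𝒜, ∀ n, ∃ A ∈ As, AlSub (B n) A) ∧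
    Cardinal.mk 𝒜 = c}

/-- The set of cardinalities of witnessing families for `non*_ω(I)`: families `𝒜` of
infinite subsets of `X` such that for every countable `B̄ ⊆ I` there is `A ∈ 𝒜` with
`A ∩ B` finite for all `B ∈ B̄`.  `non*_ω(I)` is the minimum of this set. -/
def nonStarOmegaFam {X : Type} (I : Set (Set X)) : Set Cardinal :=
  {c | ∃ 𝒜 : Set (Set X), (∀ A ∈ 𝒜, A.Infinite) ∧
    (∀ B : ℕ → Set X, (∀ n, B n ∈ I) → ∃ A ∈ 𝒜, ∀ n, (A ∩ B n).Finite) ∧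
    Cardinal.mk 𝒜 = c}

/-- The set of cardinalities of witnessing families for `cov*(I)`: families `𝒜 ⊆ I` such
that every infinite `B ⊆ X` has infinite intersection with some member of `𝒜`.
`cov*(I)` is the minimum of this set (`∞` if it is empty, i.e. if `I` is not tall). -/
def covStarFam {X : Type} (I : Set (Set X)) : Set Cardinal :=
  {c | ∃ 𝒜 : Set (Set X), 𝒜 ⊆ I ∧
    (∀ B : Set X, B.Infinite → ∃ A ∈ 𝒜, (A ∩ B).Infinite) ∧ Cardinal.mk 𝒜 = c}

/-- The set of cardinalities of witnessing families for `non*(I)`: families `𝒜` of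
infinite subsets of `X` such that every `B ∈ I` has finite intersection with some
member of `𝒜`.  `non*(I)` is the minimum of this set. -/
def nonStarFam {X : Type} (I : Set (Set X)) : Set Cardinal :=
  {c | ∃ 𝒜 : Set (Set X), (∀ A ∈ 𝒜, A.Infinite) ∧
    (∀ B ∈ I, ∃ A ∈ 𝒜, (A ∩ B).Finite) ∧ Cardinal.mk 𝒜 = c}

/-- The meager ideal of the product space `X^ω`, where `X` carries the discrete
topology (for countable `X` this is a Polish space). -/
def meagerIdeal (X : Type) : Set (Set (ℕ → X)) :=
  letI : TopologicalSpace X := ⊥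
  {A : Set (ℕ → X) | IsMeagre A}

/-- The Fubini product `I ⊗ J` of two ideals. -/
def Fubini {X Y : Type} (I : Set (Set X)) (J : Set (Set Y)) : Set (Set (X × Y)) :=
  {A | {x : X | {y : Y | (x, y) ∈ A} ∉ J} ∈ I}

/-- The ideal `Fin` of finite subsets of `X`. -/
def finIdeal (X : Type) : Set (Set X) := {A : Set X | A.Finite}

/-- The nowhere dense ideal on `2^{<ω}`: `A` belongs to it iff for every `s` there is an
extension `t ⊇ s` none of whose extensions belongs to `A`. -/
def nwdIdeal : Set (Set (List Bool)) :=
  {A | ∀ s : List Bool, ∃ t : List Bool, s <+: t ∧ ∀ u : List Bool, t <+: u → u ∉ A}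

/-- A submeasure: monotone, finitely subadditive, vanishing on `∅`. -/
def IsSubmeasure (φ : Set ℕ → ℝ≥0∞) : Prop :=
  φ ∅ = 0 ∧ (∀ A B : Set ℕ, A ⊆ B → φ A ≤ φ B) ∧ ∀ A B : Set ℕ, φ (A ∪ B) ≤ φ A + φ B

/-- `I` is gradually fragmented: there are a partition `⟨P n⟩` of `ω` into nonempty finite
sets and submeasures `φ n` with `A ∈ I ↔ sup_n φ n (A ∩ P n) < ∞`, together with
`f : ω → ω` such that for all `n, i`, for all but finitely many `j`: any family of at
most `i` subsets of `P j`, each of `φ j`-value `≤ n`, has union of `φ j`-value `≤ f n`. -/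
def GraduallyFragmented (I : Set (Set ℕ)) : Prop :=
  ∃ (P : ℕ → Set ℕ) (φ : ℕ → Set ℕ → ℝ≥0∞) (f : ℕ → ℕ),
    (∀ n, (P n).Finite) ∧ (∀ n, (P n).Nonempty) ∧
    (∀ n m, n ≠ m → Disjoint (P n) (P m)) ∧ (⋃ n, P n) = Set.univ ∧
    (∀ n, IsSubmeasure (φ n)) ∧
    (∀ A : Set ℕ, A ∈ I ↔ (⨆ n, φ n (A ∩ P n)) < ⊤) ∧
    (∀ n i : ℕ, ∀ᶠ j in atTop, ∀ ℬ : Finset (Set ℕ), ℬ.card ≤ i →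
      (∀ B ∈ ℬ, B ⊆ P j) → (∀ B ∈ ℬ, φ j B ≤ (n : ℝ≥0∞)) →
      φ j (⋃ B ∈ ℬ, B) ≤ ((f n : ℕ) : ℝ≥0∞))

/-- The basic clopen cylinder of `2^ω` determined by a finite binary string. -/
def cylSet (s : List Bool) : Set (ℕ → Bool) :=
  {x | ∀ i : Fin s.length, x i.val = s.get i}

/-- `A ⊆ 2^ω` is null for the uniform (coin-flipping) product measure: for every `ε > 0`
it is covered by countably many cylinders of total weight `≤ ε` (the cylinder of a
string `s` has weight `2^{-|s|}`). -/
def IsNullCantor (A : Set (ℕ → Bool)) : Prop :=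
  ∀ ε : ℝ≥0∞, 0 < ε → ∃ s : ℕ → List Bool,
    A ⊆ (⋃ n, cylSet (s n)) ∧ (∑' n : ℕ, (2⁻¹ : ℝ≥0∞) ^ (s n).length) ≤ ε

/-- Coordinatewise addition modulo 2 on `2^ω`. -/
def xorAdd (x y : ℕ → Bool) : ℕ → Bool := fun n => xor (x n) (y n)

/-- The transitive additivity `add_t(𝒩)` of the null ideal of `2^ω`:
`min {|A| : A ⊆ 2^ω ∧ ∃ X ∈ 𝒩, A + X ∉ 𝒩}`. -/
def addTNull : Cardinal :=
  sInf {c | ∃ A : Set (ℕ → Bool),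
    (∃ N : Set (ℕ → Bool), IsNullCantor N ∧ ¬ IsNullCantor (Set.image2 xorAdd A N)) ∧
    Cardinal.mk A = c}

/-- Kada's cardinal invariant `𝔩`: the least `κ` such that for every `g ∈ ω^ω` there is a
family `𝒮`, of size `κ`, of slaloms `S` with `S i ⊆ {0, …, g i}` and `|S i| ≤ i`, such
that every `f ≤* g` satisfies `f ∈* S` for some `S ∈ 𝒮`. -/
def lNum : Cardinal :=
  sInf {c : Cardinal | ∀ g : ℕ → ℕ, ∃ 𝒮 : Set (ℕ → Finset ℕ),
    (∀ S ∈ 𝒮, ∀ i : ℕ, S i ⊆ Finset.range (g i + 1) ∧ (S i).card ≤ i) ∧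
    (∀ f : ℕ → ℕ, LeStar f g → ∃ S ∈ 𝒮, ∀ᶠ i in atTop, f i ∈ S i) ∧
    Cardinal.mk 𝒮 = c}

/-- Membership in `C ⊆ 2^ω` only depends on the first `n` coordinates. -/
def DeterminedBy (C : Set (ℕ → Bool)) (n : ℕ) : Prop :=
  ∀ x y : ℕ → Bool, (∀ i < n, x i = y i) → (x ∈ C ↔ y ∈ C)

/-- Extension of a finite binary string by `false`s. -/
def extendFalse {n : ℕ} (s : Fin n → Bool) : ℕ → Bool :=
  fun i => if h : i < n then s ⟨i, h⟩ else false

/-- `C ⊆ 2^ω` has uniform product measure `1/2`: for some `n`, membership in `C` depends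
only on the first `n` coordinates and exactly half of the `2^n` cylinders of level `n`
are included in `C`. -/
def HalfMeasure (C : Set (ℕ → Bool)) : Prop :=
  ∃ n : ℕ, DeterminedBy C n ∧
    2 * Nat.card {s : Fin n → Bool // extendFalse s ∈ C} = 2 ^ n

/-- Clopenness in the Cantor space `2^ω` (`Bool` discrete, product topology). -/
def IsClopenCantor (C : Set (ℕ → Bool)) : Prop :=
  letI : TopologicalSpace Bool := ⊥
  IsClopen C

/-- Closedness in the Cantor space `2^ω`. -/
def IsClosedCantor (C : Set (ℕ → Bool)) : Prop :=
  letI : TopologicalSpace Bool := ⊥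
  IsClosed C

/-- `Ω`: the (countable) set of clopen subsets of `2^ω` of measure `1/2`. -/
abbrev SoleckiBase : Type := {C : Set (ℕ → Bool) // IsClopenCantor C ∧ HalfMeasure C}

/-- The Solecki ideal `𝒮` on `Ω`: the ideal generated by the sets
`I_y = {C ∈ Ω : y ∈ C}` for `y ∈ 2^ω`. -/
def SoleckiIdeal : Set (Set SoleckiBase) :=
  {A | ∃ F : Finset (ℕ → Bool), A ⊆ ⋃ y ∈ F, {C : SoleckiBase | y ∈ C.val}}

/-- `cov_ω(𝒩)`: the least cardinality of a family of Lebesgue-null sets of reals such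
that every countable set of reals is contained in one of them. -/
def covOmegaNull : Cardinal :=
  sInf {c | ∃ 𝒜 : Set (Set ℝ), (∀ N ∈ 𝒜, MeasureTheory.volume N = 0) ∧
    (∀ B : Set ℝ, B.Countable → ∃ N ∈ 𝒜, B ⊆ N) ∧ Cardinal.mk 𝒜 = c}

/-- `non(𝒩)`: the least cardinality of a non-null set of reals. -/
def nonNullReal : Cardinal :=
  sInf {c | ∃ S : Set ℝ, MeasureTheory.volume S ≠ 0 ∧ Cardinal.mk S = c}

/-- The eventually different ideal `ℰ𝒟` on `ω × ω`. -/
def EDIdeal : Set (Set (ℕ × ℕ)) :=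
  {A | ∃ k : ℕ, ∀ᶠ n in atTop,
    {m : ℕ | (n, m) ∈ A}.Finite ∧ {m : ℕ | (n, m) ∈ A}.ncard ≤ k}

/-- Characteristic function identifying `P(ω)` with `2^ω`. -/
def chiSet (A : Set ℕ) : ℕ → Bool :=
  fun n => @decide (n ∈ A) (Classical.propDecidable _)

/-- `I ⊆ P(ω)` is `F_σ`: under the identification `P(ω) ≅ 2^ω`, `I` is a countable
union of closed subsets of the Cantor space. -/
def IsFSigmaIdeal (I : Set (Set ℕ)) : Prop :=
  ∃ C : ℕ → Set (ℕ → Bool), (∀ n, IsClosedCantor (C n)) ∧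
    ∀ A : Set ℕ, A ∈ I ↔ chiSet A ∈ ⋃ n, C n

/-- The underlying countable set of `Fin^{⊗(n+1)}`: `FinPowType 0 = ω`,
`FinPowType (n+1) = ω × FinPowType n`. -/
def FinPowType : ℕ → Type
  | 0 => ℕ
  | n + 1 => ℕ × FinPowType n

/-- The iterated Fubini power of `Fin`: `FinPowIdeal 0 = Fin`, and
`FinPowIdeal (n+1) = Fin ⊗ FinPowIdeal n`; thus `Fin^{⊗k} = FinPowIdeal (k-1)`. -/
def FinPowIdeal : (n : ℕ) → Set (Set (FinPowType n))
  | 0 => finIdeal ℕ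
  | n + 1 => Fubini (finIdeal ℕ) (FinPowIdeal n)

/-- `π` `k`-constantly bounding-predicts `f`: for all but finitely many `i` there is
`j ∈ [i, i + k)` with `f j ≤ π (f ↾ j)`. -/
def ConstBddPred (k : ℕ) (π : List ℕ → ℕ) (f : ℕ → ℕ) : Prop :=
  ∀ᶠ i in atTop, ∃ j : ℕ, i ≤ j ∧ j < i + k ∧ f j ≤ π (seg f j)

/-- The constant bounding evasion number `𝔢^const_≤(k)`. -/
def eConstLe (k : ℕ) : Cardinal :=
  sInf {c | ∃ F : Set (ℕ → ℕ),
    (∀ π : List ℕ → ℕ, ∃ f ∈ F, ¬ ConstBddPred k π f) ∧ Cardinal.mk F = c}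

/-- The constant bounding prediction number `𝔳^const_≤(k)`. -/
def vConstLe (k : ℕ) : Cardinal :=
  sInf {c | ∃ Ps : Set (List ℕ → ℕ),
    (∀ f : ℕ → ℕ, ∃ π ∈ Ps, ConstBddPred k π f) ∧ Cardinal.mk Ps = c}

/-- The asymptotic density zero ideal `𝒵` on `ω`. -/
def densityZero : Set (Set ℕ) :=
  {A : Set ℕ | Tendsto (fun n : ℕ => ((A ∩ Iio n).ncard : ℝ) / (n : ℝ)) atTop (nhds (0 : ℝ))}

/-- The σ-ideal `ℰ` on `2^ω` generated by the closed null sets. -/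
def EIdeal : Set (Set (ℕ → Bool)) :=
  {A | ∃ C : ℕ → Set (ℕ → Bool),
    (∀ n, IsClosedCantor (C n) ∧ IsNullCantor (C n)) ∧ A ⊆ ⋃ n, C n}

/-! If `B` is nowhere dense in `2^{<ω}`, the branches `{x ↾ n | n}` almost disjoint from `B` are
those of a residual set of points `x`, so the branches of a nonmeager set of points form a witness
for `non*_ω(nwd)`.

Conversely, let `𝒜` be a witness and let `⋂ m, V m` be a dense `G_δ` set with all `V m` open. The
strings `s` such that, for all `m ≤ N`, every modification below `N` of every point of `[s]` lies
in `V m` have a nowhere dense complement, so for some `A ∈ 𝒜` and every `N` almost all `s ∈ A`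
have this property. Listing `A` as `s 0, s 1, …` and letting `x` agree with `s (j n)` on the
`n`-th block of a suitable interval partition puts `x` into every `V m`, provided that `j` is not
dominated by a function depending only on the listing and the `V m`. Such a `j` comes from a
second member of `𝒜`, since blocks of zeros turn `𝒜` into an unbounded family of functions. The
points `x` obtained from pairs of members of `𝒜` thus form a nonmeager set, of cardinality at most
`|𝒜 × 𝒜| = |𝒜|`. -/

/-- `𝒜` witnesses an upper bound for `non*_ω(I)`: it consists of infinite sets and, for every
countable subfamily of `I`, has a member almost disjoint from all sets of that subfamily. -/
structure IsNonStarOmegaWitness {X : Type} (I 𝒜 : Set (Set X)) : Prop where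
  infinite : ∀ A ∈ 𝒜, A.Infinite
  exists_finite_inter_nat :
    ∀ B : ℕ → Set X, (∀ n, B n ∈ I) → ∃ A ∈ 𝒜, ∀ n, (A ∩ B n).Finite

lemma IsNonStarOmegaWitness.mk_mem_nonStarOmegaFam {X : Type} {I 𝒜 : Set (Set X)}
    (h𝒜 : IsNonStarOmegaWitness I 𝒜) : #𝒜 ∈ nonStarOmegaFam I :=
  ⟨𝒜, h𝒜.infinite, h𝒜.exists_finite_inter_nat, rfl⟩

lemma IsNonStarOmegaWitness.exists_finite_inter {X : Type} {I 𝒜 : Set (Set X)}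
    (h𝒜 : IsNonStarOmegaWitness I 𝒜) {ι : Type*} [Countable ι] [Nonempty ι] {B : ι → Set X}
    (hB : ∀ i, B i ∈ I) : ∃ A ∈ 𝒜, ∀ i, (A ∩ B i).Finite := by
  obtain ⟨e, he⟩ := exists_surjective_nat ι
  obtain ⟨A, hA, hfin⟩ := h𝒜.exists_finite_inter_nat (B ∘ e) fun n => hB (e n)
  exact ⟨A, hA, he.forall.2 hfin⟩

lemma nonIdeal_le_mk {Y : Type} {J : Set (Set Y)} {S : Set Y} (hS : S ∉ J) : nonIdeal J ≤ #S :=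
  csInf_le' ⟨S, hS, rfl⟩

section Cylinders

variable {X : Type}

lemma length_seg (x : ℕ → X) (n : ℕ) : (seg x n).length = n := by
  simp [seg]

lemma seg_injective (x : ℕ → X) : Function.Injective (seg x) := fun m n h => by
  simpa only [length_seg] using congrArg List.length h

lemma seg_prefix_seg (x : ℕ → X) {m n : ℕ} (h : m ≤ n) : seg x m <+: seg x n := by
  obtain ⟨k, rfl⟩ := Nat.exists_eq_add_of_le h
  simp [seg, List.range_add]

lemma mem_cylSet {s : List Bool} {x : ℕ → Bool} :
    x ∈ cylSet s ↔ ∀ i (hi : i < s.length), x i = s[i] :=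
  ⟨fun h i hi => h ⟨i, hi⟩, fun h i => h i i.2⟩

lemma mem_cylSet_iff_seg {s : List Bool} {x : ℕ → Bool} :
    x ∈ cylSet s ↔ seg x s.length = s := by
  simp [mem_cylSet, seg, List.ext_getElem_iff]

lemma mem_cylSet_seg {x y : ℕ → Bool} {n : ℕ} : y ∈ cylSet (seg x n) ↔ ∀ i < n, y i = x i := by
  simp [mem_cylSet, seg]

lemma prefix_seg_of_mem_cylSet {s : List Bool} {x : ℕ → Bool} {n : ℕ} (hx : x ∈ cylSet s)
    (hn : s.length ≤ n) : s <+: seg x n := by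
  simpa only [mem_cylSet_iff_seg.1 hx] using seg_prefix_seg x hn

lemma cylSet_nonempty (s : List Bool) : (cylSet s).Nonempty :=
  ⟨fun i => s.getD i false, mem_cylSet.2 fun _ hi => List.getD_eq_getElem _ _ hi⟩

lemma cylSet_anti {s t : List Bool} (h : s <+: t) : cylSet t ⊆ cylSet s := by
  obtain ⟨r, rfl⟩ := h
  intro x hx
  refine mem_cylSet.2 fun i hi => ?_
  rw [mem_cylSet.1 hx i (by simp only [List.length_append]; omega), List.getElem_append_left hi]

lemma isTopologicalBasis_range_cylSet : TopologicalSpace.IsTopologicalBasis (range cylSet) := by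
  convert PiNat.isTopologicalBasis_cylinders fun _ : ℕ => Bool using 1
  ext U
  constructor
  · rintro ⟨s, rfl⟩
    obtain ⟨x, hx⟩ := cylSet_nonempty s
    refine ⟨x, s.length, ?_⟩
    rw [← mem_cylSet_iff_seg.1 hx, length_seg]
    exact Set.ext fun y => mem_cylSet_seg
  · rintro ⟨x, n, rfl⟩
    exact ⟨seg x n, Set.ext fun y => mem_cylSet_seg⟩

lemma isOpen_cylSet (s : List Bool) : IsOpen (cylSet s) :=
  isTopologicalBasis_range_cylSet.isOpen ⟨s, rfl⟩

lemma dense_iff_cylSet {U : Set (ℕ → Bool)} : Dense U ↔ ∀ s, (cylSet s ∩ U).Nonempty := by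
  simp [isTopologicalBasis_range_cylSet.dense_iff, cylSet_nonempty]

lemma ofPred_not_cylSet_subset_mem_nwdIdeal {U : Set (ℕ → Bool)} (hU : IsOpen U) (hd : Dense U) :
    {s | ¬ cylSet s ⊆ U} ∈ nwdIdeal := by
  intro s
  obtain ⟨x, hxs, hxU⟩ := dense_iff_cylSet.1 hd s
  obtain ⟨_, ⟨t, rfl⟩, hxt, htU⟩ :=
    isTopologicalBasis_range_cylSet.exists_subset_of_mem_open hxU hU
  refine ⟨seg x (max s.length t.length), prefix_seg_of_mem_cylSet hxs (le_max_left _ _),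
    fun u hu hmem => hmem ?_⟩
  exact (cylSet_anti ((prefix_seg_of_mem_cylSet hxt (le_max_right _ _)).trans hu)).trans htU

end Cylinders

section Branches

/-- The open subset of `2^ω` associated with `B ⊆ 2^{<ω}`: the points having an initial segment
none of whose extensions belongs to `B`. It is dense when `B` is nowhere dense. -/
def avoidingSet (B : Set (List Bool)) : Set (ℕ → Bool) :=
  ⋃ t ∈ {t : List Bool | ∀ u, t <+: u → u ∉ B}, cylSet t

lemma isOpen_avoidingSet (B : Set (List Bool)) : IsOpen (avoidingSet B) :=
  isOpen_biUnion fun t _ => isOpen_cylSet t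

lemma dense_avoidingSet {B : Set (List Bool)} (hB : B ∈ nwdIdeal) : Dense (avoidingSet B) := by
  refine dense_iff_cylSet.2 fun s => ?_
  obtain ⟨t, hst, ht⟩ := hB s
  obtain ⟨x, hx⟩ := cylSet_nonempty t
  exact ⟨x, cylSet_anti hst hx, mem_biUnion ht hx⟩

lemma finite_range_seg_inter {B : Set (List Bool)} {x : ℕ → Bool} (hx : x ∈ avoidingSet B) :
    (range (seg x) ∩ B).Finite := by
  obtain ⟨t, ht, hxt⟩ := mem_iUnion₂.1 hx
  refine ((finite_Iio t.length).image (seg x)).subset ?_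
  rintro _ ⟨⟨n, rfl⟩, hn⟩
  refine mem_image_of_mem _ (mem_Iio.2 (lt_of_not_ge fun htn => ?_))
  exact ht _ (prefix_seg_of_mem_cylSet hxt htn) hn

lemma isNonStarOmegaWitness_image_range_seg {S : Set (ℕ → Bool)} (hS : ¬ IsMeagre S) :
    IsNonStarOmegaWitness nwdIdeal ((fun x => range (seg x)) '' S) where
  infinite := by
    rintro _ ⟨x, _, rfl⟩
    exact infinite_range_of_injective (seg_injective x)
  exists_finite_inter_nat B hB := by
    have hres : ⋂ n, avoidingSet (B n) ∈ residual (ℕ → Bool) := countable_iInter_mem.2 fun n =>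
      residual_of_dense_open (isOpen_avoidingSet _) (dense_avoidingSet (hB n))
    obtain ⟨x, hxS, hx⟩ : ∃ x ∈ S, x ∈ ⋂ n, avoidingSet (B n) := by
      by_contra! hdisj
      exact hS (mem_of_superset hres fun x hx hxS => hdisj x hxS hx)
    exact ⟨_, mem_image_of_mem _ hxS, fun n => finite_range_seg_inter (mem_iInter.1 hx n)⟩

end Branches

section Unbounded

/-- The length of the block of zeros of `a` starting at position `p`; it is `0` when
`a.length ≤ p`. -/
def zeroRun (a : List Bool) (p : ℕ) : ℕ := (a.drop p).idxOf true

lemma le_zeroRun_append_replicate (s r : List Bool) (m n : ℕ) :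
    n ≤ zeroRun (s ++ List.replicate (m + n) false ++ r) (s.length + m) := by
  have hdrop : (s ++ List.replicate (m + n) false ++ r).drop (s.length + m) =
      List.replicate n false ++ r := by
    rw [← List.replicate_append_replicate, List.append_assoc, List.append_assoc,
      ← List.append_assoc s]
    exact List.drop_left' (by simp)
  rw [zeroRun, hdrop, List.idxOf_append_of_notMem (by simp [List.mem_replicate])]
  simp

lemma zeroRun_append_true_le {s : List Bool} {p : ℕ} (hp : p ≤ s.length) (r : List Bool) :
    zeroRun (s ++ true :: r) p ≤ s.length := by
  rw [zeroRun, List.drop_append_of_le_length hp, List.idxOf_append]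
  split_ifs with h
  · exact List.idxOf_le_length.trans (by simp)
  · simp

lemma ofPred_zeroRun_le_mem_nwdIdeal (G : ℕ → ℕ) (N : ℕ) :
    {a | ∀ p, N ≤ p → zeroRun a p ≤ G p} ∈ nwdIdeal := by
  intro s
  refine ⟨s ++ List.replicate (N + (G (s.length + N) + 1)) false, List.prefix_append _ _, ?_⟩
  rintro _ ⟨r, rfl⟩ hmem
  have hle := hmem (s.length + N) (Nat.le_add_left _ _)
  have hge := le_zeroRun_append_replicate s r N (G (s.length + N) + 1)
  omega

lemma ofPred_length_le_zeroRun_mem_nwdIdeal {G : ℕ → ℕ} (hG : Monotone G) (p : ℕ) :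
    {a | a.length ≤ G (zeroRun a p)} ∈ nwdIdeal := by
  intro s
  set v := s ++ List.replicate p false with hv
  refine ⟨v ++ true :: List.replicate (G v.length) false, by simp [hv], ?_⟩
  rintro _ ⟨r, rfl⟩ hmem
  rw [mem_ofPred_eq, List.append_assoc, List.cons_append] at hmem
  have hrun := hG (zeroRun_append_true_le (p := p) (s := v) (by simp [hv])
    (List.replicate (G v.length) false ++ r))
  simp only [List.length_append, List.length_cons, List.length_replicate] at hmem hrun
  omega

/-- If some `r · p` is unbounded on `A`, then `j` records the sizes `ℓ a` of elements `a` of `A`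
with large `r a p`; otherwise `j p` bounds `r · p` on `A`. -/
lemma exists_not_leStar_of_infinite {X : Type*} {A : Set X} (hA : A.Infinite) (r : X → ℕ → ℕ)
    (ℓ : X → ℕ) : ∃ j : ℕ → ℕ, ∀ G : ℕ → ℕ, Monotone G →
      (∀ N, (A ∩ {a | ∀ p, N ≤ p → r a p ≤ G p}).Finite) →
      (∀ p, (A ∩ {a | ℓ a ≤ G (r a p)}).Finite) → ¬ LeStar j G := by
  by_cases hbdd : ∀ p, BddAbove ((r · p) '' A)
  · choose j hj using hbdd
    refine ⟨j, fun G _ hfin _ hle => ?_⟩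
    obtain ⟨N, hN⟩ := eventually_atTop.1 hle
    exact hA ((hfin N).subset fun a ha =>
      ⟨ha, fun p hp => (hj p (mem_image_of_mem _ ha)).trans (hN p hp)⟩)
  · obtain ⟨p, hp⟩ := not_forall.1 hbdd
    have hlarge : ∀ n, ∃ a ∈ A, n < r a p := fun n => by
      simpa using not_bddAbove_iff.1 hp n
    choose a haA har using hlarge
    refine ⟨fun n => ℓ (a n), fun G hG _ hfin hle => ?_⟩
    obtain ⟨M, hM⟩ := ((hfin p).image (r · p)).bddAbove
    obtain ⟨n, hMn, hn⟩ := ((eventually_ge_atTop M).and hle).exists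
    have hmem : a n ∈ A ∩ {a | ℓ a ≤ G (r a p)} := ⟨haA n, hn.trans (hG (har n).le)⟩
    exact ((har n).trans_le (hM (mem_image_of_mem _ hmem))).not_ge hMn

lemma IsNonStarOmegaWitness.exists_unbounded {𝒜 : Set (Set (List Bool))}
    (h𝒜 : IsNonStarOmegaWitness nwdIdeal 𝒜) :
    ∃ j : 𝒜 → ℕ → ℕ, ∀ G : ℕ → ℕ, ∃ A, ¬ LeStar (j A) G := by
  choose j hj using fun A : 𝒜 =>
    exists_not_leStar_of_infinite (h𝒜.infinite A A.2) zeroRun List.length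
  refine ⟨j, fun G => ?_⟩
  have hmono : Monotone (partialSups G) := (partialSups G).monotone
  obtain ⟨A, hA, hfin⟩ := h𝒜.exists_finite_inter (ι := ℕ ⊕ ℕ)
    (B := Sum.elim (fun N => {a | ∀ p, N ≤ p → zeroRun a p ≤ partialSups G p})
      (fun p => {a | a.length ≤ partialSups G (zeroRun a p)}))
    (Sum.forall.2 ⟨ofPred_zeroRun_le_mem_nwdIdeal _, ofPred_length_le_zeroRun_mem_nwdIdeal hmono⟩)
  refine ⟨⟨A, hA⟩, fun hle =>
    hj ⟨A, hA⟩ _ hmono (fun N => hfin (.inl N)) (fun p => hfin (.inr p)) ?_⟩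
  exact hle.mono fun n hn => hn.trans (le_partialSups G n)

lemma infinite_of_exists_unbounded {ι : Type*} {j : ι → ℕ → ℕ}
    (hj : ∀ G : ℕ → ℕ, ∃ i, ¬ LeStar (j i) G) : Infinite ι := by
  by_contra hfin
  rw [not_infinite_iff_finite] at hfin
  obtain ⟨G, hG⟩ := Set.finite_range j |>.bddAbove
  obtain ⟨i, hi⟩ := hj G
  exact hi (Eventually.of_forall (hG (mem_range_self i)))

end Unbounded

section Tails

/-- The points of `2^ω` all of whose modifications below `N` belong to `U`, as an intersection of
finitely many translates of `U`. -/
def tailCore (N : ℕ) (U : Set (ℕ → Bool)) : Set (ℕ → Bool) :=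
  ⋂ s : Fin N → Bool, xorAdd (extendFalse s) ⁻¹' U

lemma mem_of_mem_tailCore {N : ℕ} {U : Set (ℕ → Bool)} {x y : ℕ → Bool} (hx : x ∈ tailCore N U)
    (hxy : ∀ i, N ≤ i → y i = x i) : y ∈ U := by
  have hy : xorAdd (extendFalse fun i : Fin N => xor (y i) (x i)) x = y := by
    ext1 i
    by_cases hi : i < N
    · simp [xorAdd, extendFalse, hi]
    · simp [xorAdd, extendFalse, hi, hxy i (not_lt.1 hi)]
  exact hy ▸ mem_iInter.1 hx _

lemma mem_of_cylSet_subset_tailCore {N : ℕ} {U : Set (ℕ → Bool)} {s : List Bool} {x : ℕ → Bool}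
    (hs : cylSet s ⊆ tailCore N U) (hx : ∀ i, N ≤ i → ∀ hi : i < s.length, x i = s[i]) :
    x ∈ U := by
  have hmem : (fun i => s.getD i (x i)) ∈ cylSet s :=
    mem_cylSet.2 fun i hi => List.getD_eq_getElem _ _ hi
  refine mem_of_mem_tailCore (hs hmem) fun i hNi => ?_
  rcases lt_or_ge i s.length with hi | hi
  · rw [List.getD_eq_getElem _ _ hi, hx i hNi hi]
  · rw [List.getD_eq_default _ _ hi]

lemma continuous_xorAdd (a : ℕ → Bool) : Continuous (xorAdd a) :=
  continuous_pi fun i => continuous_of_discreteTopology.comp (continuous_apply i)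

/-- Coordinatewise addition modulo 2 of `a`, as a homeomorphism of `2^ω`. -/
def xorAddHomeomorph (a : ℕ → Bool) : (ℕ → Bool) ≃ₜ (ℕ → Bool) where
  toFun := xorAdd a
  invFun := xorAdd a
  left_inv x := by ext1 i; simp [xorAdd]
  right_inv x := by ext1 i; simp [xorAdd]
  continuous_toFun := continuous_xorAdd a
  continuous_invFun := continuous_xorAdd a

lemma isOpen_tailCore {U : Set (ℕ → Bool)} (hU : IsOpen U) (N : ℕ) : IsOpen (tailCore N U) :=
  isOpen_iInter_of_finite fun _ => hU.preimage (continuous_xorAdd _)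

lemma dense_tailCore {U : Set (ℕ → Bool)} (hU : IsOpen U) (hd : Dense U) (N : ℕ) :
    Dense (tailCore N U) :=
  dense_iInter_of_isOpen (fun _ => hU.preimage (continuous_xorAdd _))
    fun s => hd.preimage (xorAddHomeomorph (extendFalse s)).isOpenMap

end Tails

section Blocks

variable {X : Type*}

/-- The starting position of the `n`-th block when the strings `w 0, w 1, …` are written one after
the other. The summand `1` keeps every block nonempty. -/
def blockStart (w : ℕ → List X) (n : ℕ) : ℕ := ∑ i ∈ Finset.range n, ((w i).length + 1)

lemma blockStart_succ (w : ℕ → List X) (n : ℕ) :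
    blockStart w (n + 1) = blockStart w n + ((w n).length + 1) :=
  Finset.sum_range_succ _ _

lemma strictMono_blockStart (w : ℕ → List X) : StrictMono (blockStart w) :=
  strictMono_nat_of_lt_succ fun n => by rw [blockStart_succ]; omega

lemma exists_forall_mem_Ico_eq {J : ℕ → ℕ} (hJ : StrictMono J) (w : ℕ → ℕ → X) :
    ∃ x : ℕ → X, ∀ n, ∀ i ∈ Ico (J n) (J (n + 1)), x i = w n i := by
  refine ⟨fun i => w (Nat.findGreatest (fun n => J n ≤ i) i) i, fun n i ⟨hni, hin⟩ => ?_⟩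
  have hblock : Nat.findGreatest (fun n => J n ≤ i) i = n := by
    refine Nat.findGreatest_eq_iff.2 ⟨hJ.le_apply.trans hni, fun _ => hni, fun m hnm _ hmi => ?_⟩
    exact (hin.trans_le (hJ.monotone hnm)).not_ge hmi
  simp only [hblock]

lemma exists_forall_block_eq [Nonempty X] (w : ℕ → List X) :
    ∃ x : ℕ → X, ∀ n i, blockStart w n ≤ i → ∀ hi : i < (w n).length, x i = (w n)[i] := by
  obtain ⟨d⟩ := ‹Nonempty X›
  obtain ⟨x, hx⟩ := exists_forall_mem_Ico_eq (strictMono_blockStart w) fun n i => (w n).getD i d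
  refine ⟨x, fun n i hni hi => ?_⟩
  rw [hx n i ⟨hni, by rw [blockStart_succ]; omega⟩, List.getD_eq_getElem _ _ hi]

/-- Until `P` holds at a stage, the next block start is at most `Φ` of the current one, so block
starts, and with them `j`, are bounded in terms of iterates of `Φ`. -/
lemma exists_forall_not_leStar_frequently (e : ℕ → List X) {P : ℕ → List X → Prop}
    (hP : ∀ N, ∀ᶠ k in atTop, P N (e k)) :
    ∃ G : ℕ → ℕ, ∀ j : ℕ → ℕ, ¬ LeStar j G →
      ∃ᶠ n in atTop, P (blockStart (e ∘ j) n) (e (j n)) := by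
  choose φ hφ using fun N => eventually_atTop.1 (hP N)
  let ψ := partialSups φ
  let Φ : ℕ → ℕ := fun m => m + ∑ k ∈ Finset.range (ψ m), ((e k).length + 1)
  have hΦ : Monotone Φ := fun a b hab => Nat.add_le_add hab
    (Finset.sum_le_sum_of_subset (Finset.range_mono (ψ.monotone hab)))
  have hid : id ≤ Φ := fun m => Nat.le_add_right _ _
  refine ⟨fun n => ψ (Φ^[n] n), fun j hj => ?_⟩
  by_contra hfreq
  obtain ⟨N, hN⟩ := eventually_atTop.1 (not_frequently.1 hfreq)
  set J := blockStart (e ∘ j) with hJdef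
  have hjlt : ∀ n, N ≤ n → j n < ψ (J n) := fun n hn =>
    (lt_of_not_ge fun hge => hN n hn (hφ _ _ hge)).trans_le (le_partialSups φ _)
  have hJstep : ∀ n, N ≤ n → J (n + 1) ≤ Φ (J n) := fun n hn => by
    rw [hJdef, blockStart_succ]
    exact Nat.add_le_add_left (Finset.single_le_sum (f := fun k => (e k).length + 1)
      (fun _ _ => Nat.zero_le _) (Finset.mem_range.2 (hjlt n hn))) _
  have hJiter : ∀ k, J (N + k) ≤ Φ^[k] (J N) := fun k =>
    hΦ.seq_le_seq (x := fun k => J (N + k)) k le_rfl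
      (fun i _ => hJstep (N + i) (Nat.le_add_right _ _))
      (fun i _ => (Function.iterate_succ_apply' Φ i (J N)).ge)
  refine hj (eventually_atTop.2 ⟨N + J N, fun n hn => ?_⟩)
  obtain ⟨k, rfl⟩ := Nat.exists_eq_add_of_le (show N ≤ n by omega)
  calc j (N + k) ≤ ψ (J (N + k)) := (hjlt _ (Nat.le_add_right _ _)).le
    _ ≤ ψ (Φ^[k] (N + k)) := ψ.monotone ((hJiter k).trans (hΦ.iterate k (by omega)))
    _ ≤ ψ (Φ^[N + k] (N + k)) :=
      ψ.monotone (Function.monotone_iterate_of_id_le hid (Nat.le_add_left k N) _)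

end Blocks

section Uniformity

lemma mem_iInter_of_frequently_cylSet_subset {w : ℕ → List Bool} {x : ℕ → Bool}
    (hx : ∀ n i, blockStart w n ≤ i → ∀ hi : i < (w n).length, x i = (w n)[i])
    {V : ℕ → Set (ℕ → Bool)}
    (hV : ∃ᶠ n in atTop, ∀ m ≤ blockStart w n, cylSet (w n) ⊆ tailCore (blockStart w n) (V m)) :
    x ∈ ⋂ m, V m := by
  refine mem_iInter.2 fun m => ?_
  obtain ⟨n, hn, hmn⟩ := (hV.and_eventually (eventually_ge_atTop m)).exists
  have hmJ : m ≤ blockStart w n := hmn.trans (strictMono_blockStart w).le_apply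
  exact mem_of_cylSet_subset_tailCore (hn m hmJ) (hx n)

lemma eventually_notMem_of_finite_inter {X : Type*} {A B : Set X} (h : (A ∩ B).Finite)
    (e : ℕ ↪ A) : ∀ᶠ k in atTop, (e k : X) ∉ B := by
  have hpre : {k | (e k : X) ∈ B}.Finite :=
    (h.preimage (Subtype.val_injective.comp e.injective).injOn).subset fun k hk => ⟨(e k).2, hk⟩
  exact Nat.cofinite_eq_atTop ▸ hpre.eventually_cofinite_notMem

/-- One member of `𝒜` supplies the strings, a second one dictates how fast to run through them. -/
theorem IsNonStarOmegaWitness.exists_not_isMeagre_mk_le {𝒜 : Set (Set (List Bool))}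
    (h𝒜 : IsNonStarOmegaWitness nwdIdeal 𝒜) :
    ∃ S : Set (ℕ → Bool), ¬ IsMeagre S ∧ #S ≤ #𝒜 := by
  obtain ⟨j, hj⟩ := h𝒜.exists_unbounded
  have : Infinite 𝒜 := infinite_of_exists_unbounded hj
  let e (A : 𝒜) : ℕ ↪ A.1 := (h𝒜.infinite A A.2).natEmbedding
  choose x hx using fun q : 𝒜 × 𝒜 => exists_forall_block_eq fun n => (e q.1 (j q.2 n) : List Bool)
  refine ⟨range x, fun hmeagre => ?_, ?_⟩
  · obtain ⟨_, hsub, hGδ, hdense⟩ := mem_residual.1 hmeagre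
    obtain ⟨V, hVo, rfl⟩ := hGδ.eq_iInter_nat
    have hVd : ∀ m, Dense (V m) := fun m => hdense.mono (iInter_subset V m)
    obtain ⟨A, hA, hfin⟩ := h𝒜.exists_finite_inter (ι := ℕ × ℕ) fun q =>
      ofPred_not_cylSet_subset_mem_nwdIdeal (isOpen_tailCore (hVo q.2) q.1)
        (dense_tailCore (hVo q.2) (hVd q.2) q.1)
    have hgood : ∀ N, ∀ᶠ k in atTop, ∀ m ≤ N, cylSet (e ⟨A, hA⟩ k) ⊆ tailCore N (V m) := fun N =>
      (finite_Iic N).eventually_all.2 fun m _ => by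
        simpa using eventually_notMem_of_finite_inter (hfin (N, m)) (e ⟨A, hA⟩)
    obtain ⟨G, hG⟩ := exists_forall_not_leStar_frequently (fun k => (e ⟨A, hA⟩ k : List Bool))
      (P := fun N s => ∀ m ≤ N, cylSet s ⊆ tailCore N (V m)) hgood
    obtain ⟨A', hA'⟩ := hj G
    exact hsub (mem_iInter_of_frequently_cylSet_subset (hx (⟨A, hA⟩, A')) (hG _ hA'))
      (mem_range_self _)
  · calc #(range x) ≤ #(𝒜 × 𝒜) := mk_range_le
      _ = #𝒜 := by rw [mk_prod, lift_id, mul_eq_self (aleph0_le_mk 𝒜)]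

end Uniformity

/-- `non*_ω(nwd) = non(ℳ)`. -/
theorem stmt11 : sInf (nonStarOmegaFam nwdIdeal) = nonIdeal (meagerIdeal Bool) := by
  have huniv : ¬ IsMeagre (univ : Set (ℕ → Bool)) :=
    not_isMeagre_of_isOpen isOpen_univ univ_nonempty
  apply le_antisymm
  · refine le_csInf ⟨_, univ, huniv, rfl⟩ ?_
    rintro _ ⟨S, hS, rfl⟩
    exact (csInf_le' (isNonStarOmegaWitness_image_range_seg hS).mk_mem_nonStarOmegaFam).trans
      mk_image_le
  · refine le_csInf ⟨_, (isNonStarOmegaWitness_image_range_seg huniv).mk_mem_nonStarOmegaFam⟩ ?_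
    rintro _ ⟨𝒜, hinf, hfin, rfl⟩
    obtain ⟨S, hS, hcard⟩ := (IsNonStarOmegaWitness.mk hinf hfin).exists_not_isMeagre_mk_le
    exact (nonIdeal_le_mk (J := meagerIdeal Bool) hS).trans hcard

end
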